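/- Let G be a simple graph on Fin N, K > 0, ω : Fin N → ℝ, and let θ : Fin N → ℝ be a completely degenerate equilibrium of the non-identical Kuramoto system with coupling K and frequencies ω. Let k be a vertex, let a be the number of neighbors j of k with θ j ≡ θ k + π/2 (mod 2π) and b the number of neighbors j of k with θ j ≡ θ k − π/2 (mod 2π). For x ∈ ℝ define θ^x by θ^x_k = θ k + x and θ^x_j = θ j for j ≠ k. Then for every x, E(θ) − E(θ^x) = ω k · x + K·(a − b)·sin(x), where E(φ) = −∑_h ω h · φ h + K·(1/2)·∑_{p,q} a(p,q)·(1 − cos(φ p − φ q)). -/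

import Mathlib

open Real

open Classical in
/-- Adjacency indicator: `1` if `j` and `k` are adjacent in `G`, `0` otherwise. -/
noncomputable def adjInd {V : Type*} (G : SimpleGraph V) (j k : V) : ℝ :=
  if G.Adj j k then 1 else 0

/-- A completely degenerate equilibrium of the identical Kuramoto system on `G`. -/
def IsCDE {V : Type*} [Fintype V] (G : SimpleGraph V) (θ : V → ℝ) : Prop :=
  (∀ k, ∑ j, adjInd G j k * Real.sin (θ j - θ k) = 0) ∧
  (∀ j k, G.Adj j k → Real.cos (θ j - θ k) = 0)

/-- A completely degenerate equilibrium of the non-identical Kuramoto system with coupling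
`K` and intrinsic frequencies `ω`. -/
def IsCDENonId {N : ℕ} (G : SimpleGraph (Fin N)) (K : ℝ) (ω θ : Fin N → ℝ) : Prop :=
  (∀ k, ω k + K * ∑ j, adjInd G j k * Real.sin (θ j - θ k) = 0) ∧
  (∀ j k, G.Adj j k → Real.cos (θ j - θ k) = 0)

/-- The energy of the non-identical Kuramoto system (double sum over ordered pairs,
halved). -/
noncomputable def energyNonId {N : ℕ} (G : SimpleGraph (Fin N)) (K : ℝ) (ω : Fin N → ℝ)
    (φ : Fin N → ℝ) : ℝ :=
  - ∑ h, ω h * φ h + K * ((1 / 2) * ∑ p, ∑ q, adjInd G p q * (1 - Real.cos (φ p - φ q)))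

/-!
Moving the phase of `k` alone changes only the terms at `k`: its work against the frequency `ω k`
and the interaction along the edges at `k`. On such an edge `cos (θ j - θ k) = 0`, so the addition
formula gives `cos (θ j - θ k - x) = sin (θ j - θ k) * sin x`, and the interaction energy drops by
`sin x` times the torque `∑ j, a j k * sin (θ j - θ k)` on `k`. Degeneracy also forces each of these
sines to be `±1`, so the torque is the number of neighbours a quarter turn ahead minus the number a
quarter turn behind.
-/

section Counting

theorem sum_eq_ncard_sub_ncard {ι R : Type*} [Ring R] [NeZero (2 : R)] (s : Finset ι) (f : ι → R)
    (hf : ∀ i ∈ s, f i = 1 ∨ f i = -1) :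
    ∑ i ∈ s, f i =
      (({i | i ∈ s ∧ f i = 1} : Set ι).ncard : R) - ({i | i ∈ s ∧ f i = -1} : Set ι).ncard := by
  classical
  have one_ne_neg_one : (1 : R) ≠ -1 := fun h =>
    two_ne_zero (one_add_one_eq_two.symm.trans (add_eq_zero_iff_eq_neg.2 h))
  have f_eq : ∀ i ∈ s, f i = (if f i = 1 then 1 else 0) - if f i = -1 then 1 else 0 := by
    intro i hi
    rcases hf i hi with h | h <;> simp [h, one_ne_neg_one, one_ne_neg_one.symm]
  rw [Finset.sum_congr rfl f_eq, Finset.sum_sub_distrib, Finset.sum_boole, Finset.sum_boole,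
    ← Set.ncard_coe_finset, ← Set.ncard_coe_finset, Finset.coe_filter, Finset.coe_filter]

theorem sum_sum_eq_two_nsmul_sum {ι M : Type*} [Fintype ι] [AddCommMonoid M] (D : ι → ι → M)
    (k : ι) (symm : ∀ p q, D p q = D q p) (diag : D k k = 0)
    (off : ∀ p q, p ≠ k → q ≠ k → D p q = 0) :
    ∑ p, ∑ q, D p q = 2 • ∑ j, D j k := by
  classical
  have D_eq : ∀ p q, D p q = (if p = k then D q k else 0) + if q = k then D p k else 0 := by
    intro p q
    by_cases hp : p = k <;> by_cases hq : q = k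
    · simp [hp, hq, diag]
    · rw [if_pos hp, if_neg hq, add_zero, hp, symm]
    · simp [hp, hq]
    · simp [hp, hq, off p q hp hq]
  calc
    ∑ p, ∑ q, D p q =
        ∑ p, ∑ q, (if p = k then D q k else 0) + ∑ p, ∑ q, if q = k then D p k else 0 := by
      simp only [← Finset.sum_add_distrib, ← D_eq]
    _ = ∑ q, D q k + ∑ p, D p k := by
      rw [Finset.sum_comm]
      simp only [Finset.sum_ite_eq', Finset.mem_univ, if_true]
    _ = 2 • ∑ j, D j k := (two_nsmul _).symm

end Counting

section Trigonometry

theorem sin_sub_eq_one_iff {α β : ℝ} :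
    sin (α - β) = 1 ↔ ∃ m : ℤ, α = β + π / 2 + 2 * π * m := by
  rw [sin_eq_one_iff]
  exact exists_congr fun m => ⟨fun h => by linarith, fun h => by linarith⟩

theorem sin_sub_eq_neg_one_iff {α β : ℝ} :
    sin (α - β) = -1 ↔ ∃ m : ℤ, α = β - π / 2 + 2 * π * m := by
  rw [sin_eq_neg_one_iff]
  exact exists_congr fun m => ⟨fun h => by linarith, fun h => by linarith⟩

theorem cos_sub_of_cos_eq_zero {α : ℝ} (h : cos α = 0) (x : ℝ) :
    cos (α - x) = sin α * sin x := by
  rw [cos_sub, h, zero_mul, zero_add]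

end Trigonometry

section AdjacencyIndicator

variable {V : Type*} (G : SimpleGraph V)

theorem adjInd_comm (j k : V) : adjInd G j k = adjInd G k j := by
  classical exact if_congr (G.adj_comm j k) rfl rfl

theorem adjInd_self (k : V) : adjInd G k k = 0 := by
  simp [adjInd]

theorem adj_of_adjInd_ne_zero {G : SimpleGraph V} {j k : V} (h : adjInd G j k ≠ 0) : G.Adj j k := by
  simpa [adjInd] using h

open Classical in
theorem sum_adjInd_mul [Fintype V] (k : V) (f : V → ℝ) :
    ∑ j, adjInd G j k * f j = ∑ j with G.Adj j k, f j := by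
  simp only [adjInd, ite_mul, one_mul, zero_mul, Finset.sum_filter]

theorem sum_adjInd_mul_sin_eq_ncard_sub_ncard [Fintype V] (θ : V → ℝ) (k : V)
    (degenerate : ∀ j, G.Adj j k → cos (θ j - θ k) = 0) :
    ∑ j, adjInd G j k * sin (θ j - θ k) =
      (({j | G.Adj j k ∧ ∃ m : ℤ, θ j = θ k + π / 2 + 2 * π * m} : Set V).ncard : ℝ) -
        ({j | G.Adj j k ∧ ∃ m : ℤ, θ j = θ k - π / 2 + 2 * π * m} : Set V).ncard := by
  classical
  rw [sum_adjInd_mul, sum_eq_ncard_sub_ncard]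
  · simp only [Finset.mem_filter_univ, sin_sub_eq_one_iff, sin_sub_eq_neg_one_iff]
  · intro j hj
    exact cos_eq_zero_iff_sin_eq.1 (degenerate j (Finset.mem_filter_univ j |>.1 hj))

end AdjacencyIndicator

section Energy

variable {V : Type*} [Fintype V]

/-- The interaction energy of phase oscillators `φ` coupled with weights `a`. The sum is over
ordered pairs, and the factor `1 / 2` makes each unordered pair count once when `a` is symmetric. -/
noncomputable def interactionEnergy (a : V → V → ℝ) (φ : V → ℝ) : ℝ :=
  (1 / 2) * ∑ p, ∑ q, a p q * (1 - cos (φ p - φ q))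

/-- The energy of the Kuramoto system with intrinsic frequencies `ω` and interaction weights
`K * a p q`. It extends `energyNonId`, which is the case `a = adjInd G` on `Fin N`. -/
noncomputable def kuramotoEnergy (a : V → V → ℝ) (K : ℝ) (ω φ : V → ℝ) : ℝ :=
  - ∑ h, ω h * φ h + K * interactionEnergy a φ

variable [DecidableEq V]

theorem interactionEnergy_sub_add_single {a : V → V → ℝ} (symm : ∀ p q, a p q = a q p) {k : V}
    (loopless : a k k = 0) (θ : V → ℝ) (x : ℝ) :
    interactionEnergy a θ - interactionEnergy a (θ + Pi.single k x) =
      ∑ j, a j k * (cos (θ j - θ k - x) - cos (θ j - θ k)) := by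
  let φ := θ + Pi.single k x
  let D p q := a p q * (cos (φ p - φ q) - cos (θ p - θ q))
  have D_symm : ∀ p q, D p q = D q p := by
    intro p q
    simp only [D, symm p q, ← cos_neg (φ p - φ q), ← cos_neg (θ p - θ q), neg_sub]
  have D_off : ∀ p q, p ≠ k → q ≠ k → D p q = 0 := by
    intro p q hp hq
    simp [D, φ, hp, hq]
  have D_col : ∀ j, D j k = a j k * (cos (θ j - θ k - x) - cos (θ j - θ k)) := by
    intro j
    rcases eq_or_ne j k with rfl | hj
    · simp [D, loopless]
    · simp [D, φ, hj, sub_add_eq_sub_sub]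
  calc
    interactionEnergy a θ - interactionEnergy a φ = (1 / 2) * ∑ p, ∑ q, D p q := by
      simp only [interactionEnergy, ← mul_sub, ← Finset.sum_sub_distrib, D, sub_sub_sub_cancel_left]
    _ = ∑ j, D j k := by
      rw [sum_sum_eq_two_nsmul_sum D k D_symm (by simp [D]) D_off, two_nsmul]
      ring
    _ = _ := Finset.sum_congr rfl fun j _ => D_col j

theorem kuramotoEnergy_sub_add_single {a : V → V → ℝ} (symm : ∀ p q, a p q = a q p) {k : V}
    (loopless : a k k = 0) (K : ℝ) (ω : V → ℝ) {θ : V → ℝ}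
    (degenerate : ∀ j, a j k ≠ 0 → cos (θ j - θ k) = 0) (x : ℝ) :
    kuramotoEnergy a K ω θ - kuramotoEnergy a K ω (θ + Pi.single k x) =
      ω k * x + K * (∑ j, a j k * sin (θ j - θ k)) * sin x := by
  have work : ∑ h, ω h * (θ + Pi.single k x : V → ℝ) h = ∑ h, ω h * θ h + ω k * x := by
    simp [mul_add, Finset.sum_add_distrib, Pi.single_apply]
  have interaction : interactionEnergy a θ - interactionEnergy a (θ + Pi.single k x) =
      (∑ j, a j k * sin (θ j - θ k)) * sin x := by
    rw [interactionEnergy_sub_add_single symm loopless, Finset.sum_mul]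
    refine Finset.sum_congr rfl fun j _ => ?_
    rcases eq_or_ne (a j k) 0 with uncoupled | coupled
    · simp only [uncoupled, zero_mul]
    · rw [cos_sub_of_cos_eq_zero (degenerate j coupled), degenerate j coupled, sub_zero, mul_assoc]
  rw [kuramotoEnergy, kuramotoEnergy, work]
  linear_combination K * interaction

theorem stmt16_general (G : SimpleGraph V) (K : ℝ) (ω θ : V → ℝ) (k : V)
    (degenerate : ∀ j, G.Adj j k → cos (θ j - θ k) = 0) (x : ℝ) :
    kuramotoEnergy (adjInd G) K ω θ -
        kuramotoEnergy (adjInd G) K ω (fun j => if j = k then θ k + x else θ j) =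
      ω k * x +
        K * ((({j | G.Adj j k ∧ ∃ m : ℤ, θ j = θ k + π / 2 + 2 * π * m} : Set V).ncard : ℝ) -
          (({j | G.Adj j k ∧ ∃ m : ℤ, θ j = θ k - π / 2 + 2 * π * m} : Set V).ncard : ℝ)) *
        sin x := by
  have shift_eq : (fun j => if j = k then θ k + x else θ j) = θ + Pi.single k x := by
    ext j
    rcases eq_or_ne j k with rfl | hj <;> simp [*]
  rw [shift_eq, ← sum_adjInd_mul_sin_eq_ncard_sub_ncard G θ k degenerate]
  exact kuramotoEnergy_sub_add_single (adjInd_comm G) (adjInd_self G k) K ω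
    (fun j h => degenerate j (adj_of_adjInd_ne_zero h)) x

end Energy

/-- for a completely degenerate equilibrium `θ` of the non-identical system,
a vertex `k` with `a` neighbors at phase `θ k + π/2 (mod 2π)` and `b` neighbors at phase
`θ k − π/2 (mod 2π)`, perturbing `θ k` by `+x` changes the energy by
`E(θ) − E(θ^x) = ω k · x + K·(a − b)·sin x`. -/
theorem stmt16 {N : ℕ} (G : SimpleGraph (Fin N)) (K : ℝ) (hK : 0 < K)
    (ω θ : Fin N → ℝ) (hθ : IsCDENonId G K ω θ) (k : Fin N) (x : ℝ) :
    energyNonId G K ω θ - energyNonId G K ω (fun j => if j = k then θ k + x else θ j) =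
      ω k * x +
        K * ((({j | G.Adj j k ∧ ∃ m : ℤ, θ j = θ k + π / 2 + 2 * π * m} :
                Set (Fin N)).ncard : ℝ) -
            (({j | G.Adj j k ∧ ∃ m : ℤ, θ j = θ k - π / 2 + 2 * π * m} :
                Set (Fin N)).ncard : ℝ)) * Real.sin x := by
  exact stmt16_general G K ω θ k (fun j => hθ.2 j k) x
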